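/- If 0<d₁<d₂≤1, then the minimal energies satisfy the strict inequality J_{d₁}(φ̄_{d₁}) > J_{d₂}(φ̄_{d₂}). -/

import Mathlib

open Real Set MeasureTheory

noncomputable section

/-- `φ` solves the boundary value problem `φ'' = f(φ)` on `(0,d)`, `φ(0) = 0`,
`φ(d) = Q`, `0 < φ < Q` on `(0,d)`, with `φ ∈ C²((0,d)) ∩ C¹([0,d])`. -/
def IsBVPSol (Q : ℝ) (f : ℝ → ℝ) (d : ℝ) (φ : ℝ → ℝ) : Prop :=
  ContDiffOn ℝ 1 φ (Set.Icc 0 d) ∧ ContDiffOn ℝ 2 φ (Set.Ioo 0 d) ∧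
  (∀ x ∈ Set.Ioo (0 : ℝ) d, deriv (deriv φ) x = f (φ x)) ∧
  φ 0 = 0 ∧ φ d = Q ∧ (∀ x ∈ Set.Ioo (0 : ℝ) d, 0 < φ x ∧ φ x < Q)

/-!
Every solution on `(0, d)` conserves `φ'² / 2 - F(φ)`, so it satisfies `φ' = √(2(E + F(φ)))` for a
constant `E ≥ 0`. Since `E` determines the travel time `d = ∫₀^Q ds / √(2(E + F(s)))`, solutions on
intervals of different lengths have different constants `E₁ ≠ E₂`. Completing the square gives
`J_d(φ) + E d = ∫₀^Q √(2(E + F)) + ½ ∫₀^d (φ' - √(2(E + F(φ))))²` for every `E ≥ 0`. At `E = E₂` the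
last term vanishes for `φ̄_{d₂}` and is positive for `φ̄_{d₁}`, hence
`J_{d₂} + E₂ d₂ < J_{d₁} + E₂ d₁ ≤ J_{d₁} + E₂ d₂`.

For the force at hand, `φ̄₁` is itself a solution, with `E = 0`; conservation reads
`F(φ̄₁) = φ̄₁'² / 2`, which shows that `F` is positive on `(0, Q)`.
-/

lemma deriv_pos_of_forall_ne_zero {φ : ℝ → ℝ} {a b : ℝ} (hab : a < b)
    (hφ : ContinuousOn φ (Icc a b)) (hφd : DifferentiableOn ℝ φ (Ioo a b))
    (hne : ∀ x ∈ Ioo a b, deriv φ x ≠ 0) (hlt : φ a < φ b) {x : ℝ} (hx : x ∈ Ioo a b) :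
    0 < deriv φ x := by
  have hderiv : ∀ y ∈ Ioo a b, HasDerivWithinAt φ (deriv φ y) (Ioo a b) y := fun y hy =>
    ((hφd y hy).differentiableAt (Ioo_mem_nhds hy.1 hy.2)).hasDerivAt.hasDerivWithinAt
  rcases hasDerivWithinAt_forall_lt_or_forall_gt_of_forall_ne (convex_Ioo a b) hderiv hne
    with hneg | hpos
  · have hanti : StrictAntiOn φ (Icc a b) :=
      strictAntiOn_of_deriv_neg (convex_Icc a b) hφ (by simpa only [interior_Icc] using hneg)
    exact absurd (hanti (left_mem_Icc.2 hab.le) (right_mem_Icc.2 hab.le) hab) hlt.not_gt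
  · exact hpos x hx

lemma volume_eq_lintegral_image_inv {φ g : ℝ → ℝ} {s : Set ℝ} (hs : MeasurableSet s)
    (hφ : ∀ x ∈ s, HasDerivWithinAt φ (g (φ x)) s x) (hinj : InjOn φ s)
    (hg : ∀ x ∈ s, g (φ x) ≠ 0) :
    volume s = ∫⁻ y in φ '' s, ENNReal.ofReal |g y|⁻¹ := by
  rw [lintegral_image_eq_lintegral_abs_deriv_mul hs hφ hinj, ← setLIntegral_one]
  refine setLIntegral_congr_fun hs fun x hx => ?_
  rw [← ENNReal.ofReal_mul (abs_nonneg _), mul_inv_cancel₀ (abs_ne_zero.2 (hg x hx)),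
    ENNReal.ofReal_one]

lemma continuousOn_image_of_leftInvOn {X Y : Type*} [TopologicalSpace X] [TopologicalSpace Y]
    [T2Space Y] {p : X → Y} {q : Y → X} {K : Set X} (hK : IsCompact K) (hp : ContinuousOn p K)
    (hqp : LeftInvOn q p K) : ContinuousOn q (p '' K) := by
  refine continuousOn_iff_isClosed.2 fun C hC => ⟨p '' (C ∩ K), ?_, ?_⟩
  · exact ((hK.inter_left hC).image_of_continuousOn (hp.mono inter_subset_right)).isClosed
  · rw [← hqp.image_inter', inter_eq_left.2 (image_mono inter_subset_right)]

/-- The energy `J_d(φ) = ∫₀^d (φ'² / 2 + F(φ))`. The values of `deriv φ` at the end points, which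
are junk for a function known only on `[0, d]`, do not affect the integral. -/
def energy (F : ℝ → ℝ) (d : ℝ) (φ : ℝ → ℝ) : ℝ :=
  ∫ t in (0 : ℝ)..d, (deriv φ t ^ 2 / 2 + F (φ t))

section Energy

variable {F φ : ℝ → ℝ} {d : ℝ}

lemma intervalIntegrable_comp_deriv {u : ℝ → ℝ} {L : ℝ → ℝ → ℝ} (hd : 0 < d)
    (hφ : ContDiffOn ℝ 1 φ (Icc 0 d)) (hu : ContinuousOn u (Icc 0 d))
    (hL : Continuous fun p : ℝ × ℝ => L p.1 p.2) :
    IntervalIntegrable (fun t => L (u t) (deriv φ t)) volume 0 d := by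
  have hcont : ContinuousOn (fun t => L (u t) (derivWithin φ (Icc 0 d) t)) (Icc 0 d) :=
    hL.comp_continuousOn (hu.prodMk (hφ.continuousOn_derivWithin (uniqueDiffOn_Icc hd) le_rfl))
  refine (hcont.intervalIntegrable_of_Icc hd.le).congr_uIoo fun t ht => ?_
  rw [uIoo_of_le hd.le] at ht
  simp only [derivWithin_of_mem_nhds (Icc_mem_nhds ht.1 ht.2)]

lemma energy_const_add (hd : 0 < d) (hφ : ContDiffOn ℝ 1 φ (Icc 0 d))
    (hF : ContinuousOn F (φ '' Icc 0 d)) (E : ℝ) :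
    energy (fun s => E + F s) d φ = energy F d φ + E * d := by
  have hint : IntervalIntegrable (fun t => deriv φ t ^ 2 / 2 + F (φ t)) volume 0 d :=
    intervalIntegrable_comp_deriv (L := fun u v => v ^ 2 / 2 + u) hd hφ
      (hF.comp hφ.continuousOn (mapsTo_image _ _)) (by fun_prop)
  have hconst : ∫ _ in (0 : ℝ)..d, E = E * d := by simp [mul_comm]
  rw [energy, energy, ← hconst, ← intervalIntegral.integral_add hint intervalIntegrable_const]
  exact intervalIntegral.integral_congr fun t _ => by ring

lemma intervalIntegrable_deriv_sub_sqrt_sq (hd : 0 < d) (hφ : ContDiffOn ℝ 1 φ (Icc 0 d))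
    (hF : ContinuousOn F (φ '' Icc 0 d)) :
    IntervalIntegrable (fun t => (deriv φ t - √(2 * F (φ t))) ^ 2 / 2) volume 0 d :=
  intervalIntegrable_comp_deriv (L := fun u v => (v - √(2 * u)) ^ 2 / 2) hd hφ
    (hF.comp hφ.continuousOn (mapsTo_image _ _)) (by fun_prop)

lemma intervalIntegrable_comp_mul_deriv {g : ℝ → ℝ} (hd : 0 < d)
    (hφ : ContDiffOn ℝ 1 φ (Icc 0 d)) (hg : ContinuousOn g (φ '' Icc 0 d)) :
    IntervalIntegrable (fun t => g (φ t) * deriv φ t) volume 0 d :=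
  intervalIntegrable_comp_deriv (L := fun u v => u * v) hd hφ
    (hg.comp hφ.continuousOn (mapsTo_image _ _)) (by fun_prop)

lemma integral_comp_mul_deriv_of_contDiffOn {g : ℝ → ℝ} (hd : 0 < d)
    (hφ : ContDiffOn ℝ 1 φ (Icc 0 d)) (hg : ContinuousOn g (φ '' Icc 0 d)) :
    ∫ t in (0 : ℝ)..d, g (φ t) * deriv φ t = ∫ s in φ 0..φ d, g s := by
  have hIcc : uIcc 0 d = Icc 0 d := uIcc_of_le hd.le
  refine intervalIntegral.integral_comp_mul_deriv''' (hIcc ▸ hφ.continuousOn) (fun t ht => ?_)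
    (hg.mono ?_) ?_ ?_
  · rw [min_eq_left hd.le, max_eq_right hd.le] at ht
    exact ((hφ.differentiableOn one_ne_zero).differentiableAt
      (Icc_mem_nhds ht.1 ht.2)).hasDerivAt.hasDerivWithinAt
  · rw [min_eq_left hd.le, max_eq_right hd.le]
    exact image_mono Ioo_subset_Icc_self
  · rw [hIcc]
    exact hg.integrableOn_compact (isCompact_Icc.image_of_continuousOn hφ.continuousOn)
  · rw [hIcc, ← intervalIntegrable_iff_integrableOn_Icc_of_le hd.le]
    exact intervalIntegrable_comp_mul_deriv hd hφ hg

lemma energy_eq_integral_sqrt_add (hd : 0 < d) (hφ : ContDiffOn ℝ 1 φ (Icc 0 d))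
    (hF : ContinuousOn F (φ '' Icc 0 d)) (hF₀ : ∀ t ∈ Ioo 0 d, 0 ≤ F (φ t)) :
    energy F d φ = (∫ s in φ 0..φ d, √(2 * F s)) +
      ∫ t in (0 : ℝ)..d, (deriv φ t - √(2 * F (φ t))) ^ 2 / 2 := by
  have hsqrt : ContinuousOn (fun s => √(2 * F s)) (φ '' Icc 0 d) := by fun_prop
  rw [← integral_comp_mul_deriv_of_contDiffOn hd hφ hsqrt, ← intervalIntegral.integral_add
    (intervalIntegrable_comp_mul_deriv hd hφ hsqrt)
    (intervalIntegrable_deriv_sub_sqrt_sq hd hφ hF)]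
  refine intervalIntegral.integral_congr_Ioo_of_le hd.le fun t ht => ?_
  have hsq := Real.sq_sqrt (mul_nonneg zero_le_two (hF₀ t ht))
  linear_combination -hsq / 2

lemma energy_eq_integral_sqrt (hd : 0 < d) (hφ : ContDiffOn ℝ 1 φ (Icc 0 d))
    (hF : ContinuousOn F (φ '' Icc 0 d)) (hF₀ : ∀ t ∈ Ioo 0 d, 0 ≤ F (φ t))
    (heq : ∀ t ∈ Ioo 0 d, deriv φ t = √(2 * F (φ t))) :
    energy F d φ = ∫ s in φ 0..φ d, √(2 * F s) := by
  rw [energy_eq_integral_sqrt_add hd hφ hF hF₀, add_eq_left,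
    intervalIntegral.integral_congr_Ioo_of_le (g := fun _ => 0) hd.le fun t ht => by
      simp [heq t ht]]
  exact intervalIntegral.integral_zero

lemma integral_sqrt_lt_energy (hd : 0 < d) (hφ : ContDiffOn ℝ 1 φ (Icc 0 d))
    (hF : ContinuousOn F (φ '' Icc 0 d)) (hF₀ : ∀ t ∈ Ioo 0 d, 0 ≤ F (φ t))
    (hne : ∀ t ∈ Ioo 0 d, deriv φ t ≠ √(2 * F (φ t))) :
    ∫ s in φ 0..φ d, √(2 * F s) < energy F d φ := by
  rw [energy_eq_integral_sqrt_add hd hφ hF hF₀, lt_add_iff_pos_right]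
  refine intervalIntegral.intervalIntegral_pos_of_pos_on
    (intervalIntegrable_deriv_sub_sqrt_sq hd hφ hF) (fun t ht => ?_) hd
  have := sq_pos_of_ne_zero (sub_ne_zero.2 (hne t ht))
  positivity

end Energy

/-- `F` is the potential of the force `f` on `[0, Q]`: the continuous primitive of `f` that vanishes
at `0`. Only the values of `f` in the open interval matter. -/
structure IsPotential (Q : ℝ) (f F : ℝ → ℝ) : Prop where
  continuousOn : ContinuousOn F (Icc 0 Q)
  hasDerivAt : ∀ s ∈ Ioo 0 Q, HasDerivAt F (f s) s
  map_zero : F 0 = 0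

lemma isPotential_integral_indicator {Q : ℝ} {f : ℝ → ℝ} (hf : ContinuousOn f (Icc 0 Q)) :
    IsPotential Q f fun t => ∫ s in (0 : ℝ)..t, indicator (Icc 0 Q) f s := by
  have hint : Integrable (indicator (Icc 0 Q) f) :=
    (integrable_indicator_iff measurableSet_Icc).2 (hf.integrableOn_compact isCompact_Icc)
  refine ⟨?_, fun s hs => ?_, intervalIntegral.integral_same⟩
  · exact (intervalIntegral.continuous_primitive
      (fun _ _ => hint.intervalIntegrable) 0).continuousOn
  · have hnhds : Icc 0 Q ∈ nhds s := Icc_mem_nhds hs.1 hs.2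
    have hcont : ContinuousAt (indicator (Icc 0 Q) f) s :=
      (hf.continuousAt hnhds).congr <|
        Filter.eventually_of_mem hnhds fun y hy => (indicator_of_mem hy f).symm
    have h := intervalIntegral.integral_hasDerivAt_right (hint.intervalIntegrable (a := 0))
      hint.aestronglyMeasurable.stronglyMeasurableAtFilter hcont
    rwa [indicator_of_mem (Ioo_subset_Icc_self hs)] at h

namespace IsBVPSol

variable {Q d : ℝ} {f F φ : ℝ → ℝ}

lemma contDiffOn (h : IsBVPSol Q f d φ) : ContDiffOn ℝ 1 φ (Icc 0 d) := h.1

lemma map_zero (h : IsBVPSol Q f d φ) : φ 0 = 0 := h.2.2.2.1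

lemma map_length (h : IsBVPSol Q f d φ) : φ d = Q := h.2.2.2.2.1

lemma mapsTo_Ioo (h : IsBVPSol Q f d φ) : MapsTo φ (Ioo 0 d) (Ioo 0 Q) := h.2.2.2.2.2

lemma height_pos (h : IsBVPSol Q f d φ) (hd : 0 < d) : 0 < Q :=
  have hmid := h.mapsTo_Ioo ⟨half_pos hd, half_lt_self hd⟩
  hmid.1.trans hmid.2

lemma mapsTo_Icc (h : IsBVPSol Q f d φ) (hd : 0 < d) : MapsTo φ (Icc 0 d) (Icc 0 Q) := by
  have hQ := (h.height_pos hd).le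
  intro x hx
  rcases eq_endpoints_or_mem_Ioo_of_mem_Icc hx with rfl | rfl | hx
  · rw [h.map_zero]
    exact left_mem_Icc.2 hQ
  · rw [h.map_length]
    exact right_mem_Icc.2 hQ
  · exact Ioo_subset_Icc_self (h.mapsTo_Ioo hx)

lemma image_Ioo (h : IsBVPSol Q f d φ) (hd : 0 < d) : φ '' Ioo 0 d = Ioo 0 Q := by
  refine h.mapsTo_Ioo.image_subset.antisymm ?_
  have hIVT := intermediate_value_Ioo hd.le h.contDiffOn.continuousOn
  rwa [h.map_zero, h.map_length] at hIVT

lemma hasDerivAt (h : IsBVPSol Q f d φ) {x : ℝ} (hx : x ∈ Ioo 0 d) :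
    HasDerivAt φ (deriv φ x) x :=
  ((h.contDiffOn.differentiableOn one_ne_zero).differentiableAt
    (Icc_mem_nhds hx.1 hx.2)).hasDerivAt

lemma hasDerivAt_deriv (h : IsBVPSol Q f d φ) {x : ℝ} (hx : x ∈ Ioo 0 d) :
    HasDerivAt (deriv φ) (f (φ x)) x := by
  have hC1 : ContDiffOn ℝ 1 (deriv φ) (Ioo 0 d) :=
    h.2.1.deriv_of_isOpen isOpen_Ioo one_add_one_eq_two.le
  rw [← h.2.2.1 x hx]
  exact ((hC1.differentiableOn one_ne_zero).differentiableAt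
    (Ioo_mem_nhds hx.1 hx.2)).hasDerivAt

lemma deriv_sq_div_two (h : IsBVPSol Q f d φ) (hF : IsPotential Q f F) {x : ℝ}
    (hx : x ∈ Ioo 0 d) :
    deriv φ x ^ 2 / 2 = derivWithin φ (Icc 0 d) 0 ^ 2 / 2 + F (φ x) := by
  have hd : 0 < d := hx.1.trans hx.2
  set v := derivWithin φ (Icc 0 d)
  have hv_eq : ∀ y ∈ Ioo 0 d, v y = deriv φ y := fun y hy =>
    derivWithin_of_mem_nhds (Icc_mem_nhds hy.1 hy.2)
  have hv_deriv : ∀ y ∈ Ioo 0 d, HasDerivAt v (f (φ y)) y := fun y hy =>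
    (h.hasDerivAt_deriv hy).congr_of_eventuallyEq <|
      Filter.eventually_of_mem (Ioo_mem_nhds hy.1 hy.2) hv_eq
  have hcont : ContinuousOn (fun y => v y ^ 2 / 2 - F (φ y)) (Icc 0 d) := by
    have hvc := h.contDiffOn.continuousOn_derivWithin (uniqueDiffOn_Icc hd) le_rfl
    have hFφ := hF.continuousOn.comp h.contDiffOn.continuousOn (h.mapsTo_Icc hd)
    exact ((hvc.pow 2).div_const 2).sub hFφ
  have hderiv : ∀ y ∈ Ioo 0 d, HasDerivAt (fun y => v y ^ 2 / 2 - F (φ y)) 0 y := fun y hy => by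
    have hkin := ((hv_deriv y hy).pow 2).div_const 2
    have hpot := (hF.hasDerivAt _ (h.mapsTo_Ioo hy)).comp y (h.hasDerivAt hy)
    refine (hkin.sub hpot).congr_deriv ?_
    rw [hv_eq y hy]
    ring
  have hconst := intervalIntegral.integral_eq_sub_of_hasDerivAt_of_le hx.1.le
    (hcont.mono (Icc_subset_Icc_right hx.2.le)) (fun y hy => hderiv y ⟨hy.1, hy.2.trans hx.2⟩)
    intervalIntegrable_const
  simp only [intervalIntegral.integral_zero, h.map_zero, hF.map_zero, hv_eq x hx] at hconst
  linarith

lemma potential_pos (h : IsBVPSol Q f d φ) (hd : 0 < d) (hF : IsPotential Q f F)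
    (hstart : derivWithin φ (Icc 0 d) 0 = 0) (hne : ∀ x ∈ Ioo 0 d, deriv φ x ≠ 0) {s : ℝ}
    (hs : s ∈ Ioo 0 Q) : 0 < F s := by
  obtain ⟨x, hx, rfl⟩ : s ∈ φ '' Ioo 0 d := (h.image_Ioo hd).symm ▸ hs
  have hcons := h.deriv_sq_div_two hF hx
  have := sq_pos_of_ne_zero (hne x hx)
  rw [hstart] at hcons
  linarith

lemma exists_deriv_eq_sqrt (h : IsBVPSol Q f d φ) (hd : 0 < d) (hF : IsPotential Q f F)
    (hFpos : ∀ s ∈ Ioo 0 Q, 0 < F s) :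
    ∃ E, 0 ≤ E ∧ ∀ x ∈ Ioo 0 d, deriv φ x = √(2 * (E + F (φ x))) := by
  refine ⟨derivWithin φ (Icc 0 d) 0 ^ 2 / 2, by positivity, fun x hx => ?_⟩
  have hne : ∀ y ∈ Ioo 0 d, deriv φ y ≠ 0 := fun y hy hy0 => by
    have hcons := h.deriv_sq_div_two hF hy
    have := hFpos _ (h.mapsTo_Ioo hy)
    rw [hy0] at hcons
    nlinarith
  have hpos : 0 < deriv φ x := by
    refine deriv_pos_of_forall_ne_zero hd h.contDiffOn.continuousOn
      (fun y hy => (h.hasDerivAt hy).differentiableAt.differentiableWithinAt) hne ?_ hx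
    rw [h.map_zero, h.map_length]
    exact h.height_pos hd
  rw [← h.deriv_sq_div_two hF hx, mul_div_cancel₀ _ two_ne_zero, Real.sqrt_sq hpos.le]

lemma ofReal_length_eq_lintegral (h : IsBVPSol Q f d φ) (hd : 0 < d) {g : ℝ → ℝ}
    (hg : ∀ s ∈ Ioo 0 Q, 0 < g s) (hφ : ∀ x ∈ Ioo 0 d, deriv φ x = g (φ x)) :
    ENNReal.ofReal d = ∫⁻ s in Ioo 0 Q, ENNReal.ofReal |g s|⁻¹ := by
  have hpos : ∀ x ∈ Ioo 0 d, 0 < g (φ x) := fun x hx => hg _ (h.mapsTo_Ioo hx)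
  have hmono : StrictMonoOn φ (Icc 0 d) :=
    strictMonoOn_of_deriv_pos (convex_Icc 0 d) h.contDiffOn.continuousOn fun x hx => by
      rw [interior_Icc] at hx
      exact hφ x hx ▸ hpos x hx
  rw [← h.image_Ioo hd, ← volume_eq_lintegral_image_inv measurableSet_Ioo
    (fun x hx => hφ x hx ▸ (h.hasDerivAt hx).hasDerivWithinAt)
    (hmono.injOn.mono Ioo_subset_Icc_self) fun x hx => (hpos x hx).ne', Real.volume_Ioo, sub_zero]

lemma length_eq_of_deriv_eq {d₁ d₂ : ℝ} {φ₁ φ₂ g : ℝ → ℝ} (h₁ : IsBVPSol Q f d₁ φ₁)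
    (h₂ : IsBVPSol Q f d₂ φ₂) (hd₁ : 0 < d₁) (hd₂ : 0 < d₂) (hg : ∀ s ∈ Ioo 0 Q, 0 < g s)
    (hφ₁ : ∀ x ∈ Ioo 0 d₁, deriv φ₁ x = g (φ₁ x)) (hφ₂ : ∀ x ∈ Ioo 0 d₂, deriv φ₂ x = g (φ₂ x)) :
    d₁ = d₂ := by
  rw [← ENNReal.ofReal_eq_ofReal_iff hd₁.le hd₂.le, h₁.ofReal_length_eq_lintegral hd₁ hg hφ₁,
    h₂.ofReal_length_eq_lintegral hd₂ hg hφ₂]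

lemma energy_add_eq_integral_sqrt (h : IsBVPSol Q f d φ) (hd : 0 < d)
    (hF : ContinuousOn F (Icc 0 Q)) (hF₀ : ∀ s ∈ Ioo 0 Q, 0 ≤ F s) {E : ℝ} (hE : 0 ≤ E)
    (hφ : ∀ x ∈ Ioo 0 d, deriv φ x = √(2 * (E + F (φ x)))) :
    energy F d φ + E * d = ∫ s in (0 : ℝ)..Q, √(2 * (E + F s)) := by
  have hFc := hF.mono (h.mapsTo_Icc hd).image_subset
  rw [← energy_const_add hd h.contDiffOn hFc,
    energy_eq_integral_sqrt (F := fun s => E + F s) hd h.contDiffOn (by fun_prop)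
      (fun x hx => add_nonneg hE (hF₀ _ (h.mapsTo_Ioo hx))) hφ,
    h.map_zero, h.map_length]

lemma integral_sqrt_lt_energy_add (h : IsBVPSol Q f d φ) (hd : 0 < d)
    (hF : ContinuousOn F (Icc 0 Q)) (hF₀ : ∀ s ∈ Ioo 0 Q, 0 ≤ F s)
    {E E' : ℝ} (hE : 0 ≤ E) (hE' : 0 ≤ E') (hne : E ≠ E')
    (hφ : ∀ x ∈ Ioo 0 d, deriv φ x = √(2 * (E + F (φ x)))) :
    ∫ s in (0 : ℝ)..Q, √(2 * (E' + F s)) < energy F d φ + E' * d := by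
  have hFc := hF.mono (h.mapsTo_Icc hd).image_subset
  have hFφ : ∀ x ∈ Ioo 0 d, 0 ≤ F (φ x) := fun x hx => hF₀ _ (h.mapsTo_Ioo hx)
  have hlt := integral_sqrt_lt_energy (F := fun s => E' + F s) hd h.contDiffOn (by fun_prop)
    (fun x hx => add_nonneg hE' (hFφ x hx)) fun x hx heq => hne ?_
  · rwa [energy_const_add hd h.contDiffOn hFc, h.map_zero, h.map_length] at hlt
  · have := hFφ x hx
    rw [hφ x hx, Real.sqrt_inj (by positivity) (by positivity)] at heq
    linarith

end IsBVPSol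

theorem stmt11_general {Q d₁ d₂ : ℝ} {f F φ₁ φ₂ : ℝ → ℝ} (hF : IsPotential Q f F)
    (hFpos : ∀ s ∈ Ioo 0 Q, 0 < F s) (hd₁ : 0 < d₁) (hd₁₂ : d₁ < d₂)
    (h₁ : IsBVPSol Q f d₁ φ₁) (h₂ : IsBVPSol Q f d₂ φ₂) :
    energy F d₂ φ₂ < energy F d₁ φ₁ := by
  have hd₂ : 0 < d₂ := hd₁.trans hd₁₂
  obtain ⟨E₁, hE₁, hφ₁⟩ := h₁.exists_deriv_eq_sqrt hd₁ hF hFpos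
  obtain ⟨E₂, hE₂, hφ₂⟩ := h₂.exists_deriv_eq_sqrt hd₂ hF hFpos
  have hE : E₁ ≠ E₂ := by
    rintro rfl
    refine hd₁₂.ne (h₁.length_eq_of_deriv_eq h₂ hd₁ hd₂ (g := fun s => √(2 * (E₁ + F s)))
      (fun s hs => ?_) hφ₁ hφ₂)
    have := hFpos s hs
    positivity
  have hF₀ : ∀ s ∈ Ioo 0 Q, 0 ≤ F s := fun s hs => (hFpos s hs).le
  have henergy₂ := h₂.energy_add_eq_integral_sqrt hd₂ hF.continuousOn hF₀ hE₂ hφ₂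
  have henergy₁ := h₁.integral_sqrt_lt_energy_add hd₁ hF.continuousOn hF₀ hE₁ hE₂ hE hφ₁
  have := mul_le_mul_of_nonneg_left hd₁₂.le hE₂
  linarith

section CubicProfile

variable {Q : ℝ} {κ f : ℝ → ℝ}

/-- The profile `φ̄₁(t) = Q (3t² - 2t³)`, the solution on the unit interval. -/
def cubicProfile (Q t : ℝ) : ℝ := Q * (3 * t ^ 2 - 2 * t ^ 3)

lemma hasDerivAt_cubicProfile (Q t : ℝ) :
    HasDerivAt (cubicProfile Q) (6 * Q * (t * (1 - t))) t := by
  have h := (((hasDerivAt_pow 2 t).const_mul 3).fun_sub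
    ((hasDerivAt_pow 3 t).const_mul 2)).const_mul Q
  exact h.congr_deriv (by push_cast; ring)

lemma deriv_cubicProfile (Q : ℝ) :
    deriv (cubicProfile Q) = fun t => 6 * Q * (t * (1 - t)) :=
  funext fun t => (hasDerivAt_cubicProfile Q t).deriv

lemma deriv_deriv_cubicProfile (Q t : ℝ) :
    deriv (deriv (cubicProfile Q)) t = 6 * Q * (1 - 2 * t) := by
  rw [deriv_cubicProfile]
  have h := ((hasDerivAt_id' t).fun_mul ((hasDerivAt_id' t).const_sub 1)).const_mul (6 * Q)
  exact (h.congr_deriv (by ring)).deriv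

lemma contDiff_cubicProfile (Q : ℝ) {n : WithTop ℕ∞} : ContDiff ℝ n (cubicProfile Q) := by
  unfold cubicProfile
  fun_prop

lemma continuous_cubicProfile (Q : ℝ) : Continuous (cubicProfile Q) :=
  (contDiff_cubicProfile Q (n := 0)).continuous

lemma cubicProfile_zero (Q : ℝ) : cubicProfile Q 0 = 0 := by simp [cubicProfile]

lemma cubicProfile_one (Q : ℝ) : cubicProfile Q 1 = Q := by norm_num [cubicProfile]

lemma deriv_cubicProfile_pos (hQ : 0 < Q) {t : ℝ} (ht : t ∈ Ioo (0 : ℝ) 1) :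
    0 < deriv (cubicProfile Q) t := by
  have := ht.1
  have : 0 < 1 - t := sub_pos.2 ht.2
  rw [deriv_cubicProfile]
  positivity

lemma mapsTo_cubicProfile (hQ : 0 < Q) : MapsTo (cubicProfile Q) (Ioo 0 1) (Ioo 0 Q) := by
  have hmono : StrictMonoOn (cubicProfile Q) (Icc 0 1) :=
    strictMonoOn_of_deriv_pos (convex_Icc 0 1) (continuous_cubicProfile Q).continuousOn
      fun t ht => deriv_cubicProfile_pos hQ (by rwa [interior_Icc] at ht)
  simpa only [cubicProfile_zero, cubicProfile_one] using hmono.mapsTo_Ioo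

lemma isBVPSol_cubicProfile (hQ : 0 < Q) (hκ : LeftInvOn κ (cubicProfile Q) (Icc 0 1))
    (hf : ∀ s, f s = 6 * Q * (1 - 2 * κ s)) : IsBVPSol Q f 1 (cubicProfile Q) := by
  refine ⟨(contDiff_cubicProfile Q).contDiffOn, (contDiff_cubicProfile Q).contDiffOn,
    fun t ht => ?_, cubicProfile_zero Q, cubicProfile_one Q, mapsTo_cubicProfile hQ⟩
  rw [deriv_deriv_cubicProfile, hf, hκ (Ioo_subset_Icc_self ht)]

lemma continuousOn_force (hκ : LeftInvOn κ (cubicProfile Q) (Icc 0 1))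
    (hf : ∀ s, f s = 6 * Q * (1 - 2 * κ s)) : ContinuousOn f (Icc 0 Q) := by
  have hp : ContinuousOn (cubicProfile Q) (Icc 0 1) := (continuous_cubicProfile Q).continuousOn
  have hsub : Icc 0 Q ⊆ cubicProfile Q '' Icc 0 1 := by
    simpa only [cubicProfile_zero, cubicProfile_one] using
      intermediate_value_Icc zero_le_one hp
  have hκc : ContinuousOn κ (Icc 0 Q) :=
    (continuousOn_image_of_leftInvOn isCompact_Icc hp hκ).mono hsub
  rw [funext hf]
  fun_prop

lemma potential_pos_of_force_eq {F : ℝ → ℝ} (hQ : 0 < Q)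
    (hκ : LeftInvOn κ (cubicProfile Q) (Icc 0 1)) (hf : ∀ s, f s = 6 * Q * (1 - 2 * κ s))
    (hF : IsPotential Q f F) {s : ℝ} (hs : s ∈ Ioo 0 Q) : 0 < F s := by
  refine (isBVPSol_cubicProfile hQ hκ hf).potential_pos one_pos hF ?_
    (fun t ht => (deriv_cubicProfile_pos hQ ht).ne') hs
  rw [(hasDerivAt_cubicProfile Q 0).hasDerivWithinAt.derivWithin
    (uniqueDiffOn_Icc one_pos 0 (left_mem_Icc.2 zero_le_one))]
  ring

end CubicProfile

/-- Strict monotonicity of the minimal energy: if `0 < d₁ < d₂ ≤ 1` then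
`J_{d₁}(φ̄_{d₁}) > J_{d₂}(φ̄_{d₂})`. -/
theorem stmt11
    (Q : ℝ) (hQ : 0 < Q)
    (κ : ℝ → ℝ) (hκ : ∀ t ∈ Set.Icc (0 : ℝ) 1, κ (Q * (3 * t ^ 2 - 2 * t ^ 3)) = t)
    (f : ℝ → ℝ) (hf : ∀ s : ℝ, f s = 6 * Q * (1 - 2 * κ s))
    (F : ℝ → ℝ) (hF : ∀ t : ℝ, F t = ∫ s in (0 : ℝ)..t, Set.indicator (Set.Icc 0 Q) f s)
    (d₁ d₂ : ℝ) (hd₁ : 0 < d₁) (hd₁₂ : d₁ < d₂) (hd₂ : d₂ ≤ 1)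
    (φd₁ φd₂ : ℝ → ℝ) (hφd₁ : IsBVPSol Q f d₁ φd₁) (hφd₂ : IsBVPSol Q f d₂ φd₂) :
    (∫ s in (0 : ℝ)..d₂, ((deriv φd₂ s) ^ 2 / 2 + F (φd₂ s))) <
      ∫ s in (0 : ℝ)..d₁, ((deriv φd₁ s) ^ 2 / 2 + F (φd₁ s)) := by
  have hF' : IsPotential Q f F := by
    rw [funext hF]
    exact isPotential_integral_indicator (continuousOn_force hκ hf)
  exact stmt11_general hF' (fun _ => potential_pos_of_force_eq hQ hκ hf hF') hd₁ hd₁₂ hφd₁ hφd₂
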